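/- arXiv:math/0612527 — 2 statements merged into one kernel-verified Lean document; each statement's English description precedes it below -/
import Mathlib

section
/- Let n, j be integers with 1 ≤ j ≤ n/2, let Y_ν^{n−2j} ∈ H_{n−2j}^d, and define U_{j,ν}^n(x) = (1−‖x‖²)·P_{j−1}^{(1, n−2j+(d−2)/2)}(2‖x‖²−1)·Y_ν^{n−2j}(x). Then for all x ∈ ℝ^d, Δ U_{j,ν}^n(x) = −4j·(n−j+(d−2)/2)·P_{j−1}^{(1, n−2j+(d−2)/2)}(2‖x‖²−1)·Y_ν^{n−2j}(x). -/
/-!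
A radial factor turns the Laplacian on harmonics into an ordinary differential operator: for `Y`
harmonic and homogeneous of degree `m`, Euler's identity gives
`Δ(q(‖x‖²) Y) = 4 (u D²q + (b + 1) Dq)(‖x‖²) Y` with `b = m + (d - 2) / 2`.
For `q(u) = (1 - u) P(u)` one computes `u D²q + (b + 1) Dq = L P - (b + 1) P`, where `L` is the
Jacobi operator with parameters `(1, b)` moved to `[0, 1]`. As `P(u) = P_N^{(1,b)}(2u - 1)` is an
eigenvector of `L` with eigenvalue `-N (N + b + 2)`, the result is `-(N + 1) (N + 1 + b) P`.
-/

open MvPolynomial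

noncomputable section

/-- Generalized binomial coefficient `C(z, k)` for real `z`. -/
def genBinom (z : ℝ) (k : ℕ) : ℝ := (∏ i ∈ Finset.range k, (z - i)) / (Nat.factorial k)

/-- The Jacobi polynomial `P_n^{(a,b)}`, normalized so that `P_n^{(a,b)}(1) = C(n+a, n)`. -/
def jacobiPoly (n : ℕ) (a b : ℝ) : Polynomial ℝ :=
  ∑ s ∈ Finset.range (n + 1),
    Polynomial.C (genBinom ((n : ℝ) + a) (n - s) * genBinom ((n : ℝ) + b) s) *
      (Polynomial.C (2⁻¹) * (Polynomial.X - 1)) ^ s *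
      (Polynomial.C (2⁻¹) * (Polynomial.X + 1)) ^ (n - s)

/-- The Laplace operator `Δ = ∑ ∂²/∂x_i²` on polynomials in `d` variables. -/
def mvLaplacian {d : ℕ} (p : MvPolynomial (Fin d) ℝ) : MvPolynomial (Fin d) ℝ :=
  ∑ i : Fin d, pderiv i (pderiv i p)

/-- The polynomial `‖x‖² = x₁² + ⋯ + x_d²`. -/
def sumSq (d : ℕ) : MvPolynomial (Fin d) ℝ := ∑ i : Fin d, X i ^ 2

open scoped Polynomial
open Finset.HasAntidiagonal (antidiagonal mem_antidiagonal)

theorem genBinom_succ (z : ℝ) (k : ℕ) :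
    (k + 1) * genBinom z (k + 1) = (z - k) * genBinom z k := by
  unfold genBinom
  rw [Finset.prod_range_succ, Nat.factorial_succ]
  push_cast
  field_simp

section ShiftedJacobi

variable (a b : ℝ)

/-- The coefficient of `((x - 1) / 2) ^ s * ((x + 1) / 2) ^ k` in `P_{s+k}^{(a,b)}(x)`. Indexing by
the pair of exponents instead of the degree and `s` avoids truncated subtraction. -/
def jacobiCoeff (s k : ℕ) : ℝ :=
  genBinom (s + k + a) k * genBinom (s + k + b) s

theorem jacobiCoeff_succ_left (s k : ℕ) :
    (s + 1) * (s + 1 + a) * jacobiCoeff a b (s + 1) k =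
      (k + 1) * (k + 1 + b) * jacobiCoeff a b s (k + 1) := by
  unfold jacobiCoeff
  push_cast
  rw [show (s + (k + 1) + a : ℝ) = s + 1 + k + a by ring,
    show (s + (k + 1) + b : ℝ) = s + 1 + k + b by ring]
  linear_combination
    (s + 1 + a) * genBinom (s + 1 + k + a) k * genBinom_succ (s + 1 + k + b) s
      - (k + 1 + b) * genBinom (s + 1 + k + b) s * genBinom_succ (s + 1 + k + a) k

/-- The Jacobi polynomial moved from `[-1, 1]` to `[0, 1]`: `P_n^{(a,b)}(2u - 1)`. -/
def shiftedJacobi (n : ℕ) : ℝ[X] :=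
  (jacobiPoly n a b).comp (2 * Polynomial.X - 1)

theorem shiftedJacobi_eq_sum_antidiagonal (n : ℕ) :
    shiftedJacobi a b n = ∑ p ∈ antidiagonal n,
      jacobiCoeff a b p.1 p.2 • ((Polynomial.X - 1) ^ p.1 * Polynomial.X ^ p.2) := by
  have half_mul_two : Polynomial.C (2⁻¹ : ℝ) * 2 = 1 := by
    rw [← Polynomial.C_ofNat, ← Polynomial.C_mul, inv_mul_cancel₀ two_ne_zero, Polynomial.C_1]
  have half_sub : Polynomial.C (2⁻¹ : ℝ) * (2 * Polynomial.X - 1 - 1) = Polynomial.X - 1 := by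
    linear_combination (Polynomial.X - 1) * half_mul_two
  have half_add : Polynomial.C (2⁻¹ : ℝ) * (2 * Polynomial.X - 1 + 1) = Polynomial.X := by
    linear_combination Polynomial.X * half_mul_two
  rw [Finset.Nat.sum_antidiagonal_eq_sum_range_succ_mk, shiftedJacobi, jacobiPoly,
    Polynomial.sum_comp]
  refine Finset.sum_congr rfl fun s hs => ?_
  have hsn : (s : ℝ) + (n - s : ℕ) = n := by
    exact_mod_cast Nat.add_sub_cancel' (Finset.mem_range_succ_iff.mp hs)
  simp only [Polynomial.mul_comp, Polynomial.pow_comp, Polynomial.sub_comp, Polynomial.add_comp,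
    Polynomial.C_comp, Polynomial.X_comp, Polynomial.one_comp, half_sub, half_add, jacobiCoeff,
    hsn, Polynomial.smul_eq_C_mul, mul_assoc]

/-- The hypergeometric differential operator `u (1 - u) D² + (b + 1 - (a + b + 2) u) D`, that is,
the Jacobi differential operator in the variable `u = (x + 1) / 2`. -/
def shiftedJacobiOperator : ℝ[X] →ₗ[ℝ] ℝ[X] :=
  LinearMap.mulLeft ℝ (Polynomial.X * (1 - Polynomial.X)) ∘ₗ
      Polynomial.derivative ∘ₗ Polynomial.derivative +
    LinearMap.mulLeft ℝ (Polynomial.C (b + 1) - Polynomial.C (a + b + 2) * Polynomial.X) ∘ₗ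
      Polynomial.derivative

theorem shiftedJacobiOperator_apply (p : ℝ[X]) :
    shiftedJacobiOperator a b p =
      Polynomial.X * (1 - Polynomial.X) * p.derivative.derivative +
        (Polynomial.C (b + 1) - Polynomial.C (a + b + 2) * Polynomial.X) * p.derivative :=
  rfl

theorem mul_derivative_pow {R : Type*} [CommSemiring R] {v : R[X]} (hv : v.derivative = 1)
    (s : ℕ) : v * (v ^ s).derivative = s * v ^ s := by
  cases s with
  | zero => simp
  | succ s =>
    rw [Polynomial.derivative_pow_succ, hv, Nat.cast_succ, map_add, map_natCast, map_one]
    ring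

theorem mul_derivative_derivative_pow {R : Type*} [CommRing R] {v : R[X]} (hv : v.derivative = 1)
    (s : ℕ) : v * (v ^ s).derivative.derivative = (s - 1) * (v ^ s).derivative := by
  have h := congrArg Polynomial.derivative (mul_derivative_pow hv s)
  rw [Polynomial.derivative_mul, hv, Polynomial.derivative_natCast_mul] at h
  linear_combination h

theorem shiftedJacobiOperator_pow_mul_pow (s k : ℕ) :
    shiftedJacobiOperator a b ((Polynomial.X - 1) ^ s * Polynomial.X ^ k) =
      -(((s + k) * (s + k + a + b + 1) : ℝ) • ((Polynomial.X - 1) ^ s * Polynomial.X ^ k)) +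
        ((k + b) • ((Polynomial.X - 1) ^ s * Polynomial.derivative (Polynomial.X ^ k)) -
          (s + a) • (Polynomial.derivative ((Polynomial.X - 1) ^ s) * Polynomial.X ^ k)) := by
  have hX1 : Polynomial.derivative (Polynomial.X - 1 : ℝ[X]) = 1 := by simp
  have hP := mul_derivative_pow hX1 s
  have hP' := mul_derivative_derivative_pow hX1 s
  have hQ := mul_derivative_pow (R := ℝ) Polynomial.derivative_X k
  have hQ' := mul_derivative_derivative_pow (R := ℝ) Polynomial.derivative_X k
  simp only [shiftedJacobiOperator_apply, Polynomial.derivative_mul, map_add,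
    Polynomial.smul_eq_C_mul, map_mul, map_natCast, map_one, map_ofNat]
  set P := (Polynomial.X - 1 : ℝ[X]) ^ s
  set Q := (Polynomial.X : ℝ[X]) ^ k
  -- The Euler relations avoid the truncated exponents `s - 1`, `s - 2`; what remains after them
  -- cancels because `X - (X - 1) = 1`.
  linear_combination
    -Polynomial.X * Q * hP' - (Polynomial.X - 1) * P * hQ' -
      (2 * Polynomial.X * Q.derivative +
        (Polynomial.C a + Polynomial.C b + s + 1) * Q) * hP -
      (2 * s + k + Polynomial.C a + Polynomial.C b + 1) * P * hQ

theorem sum_antidiagonal_jacobiCoeff_smul (n : ℕ) :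
    ∑ p ∈ antidiagonal n, jacobiCoeff a b p.1 p.2 • ((p.2 + b) •
        ((Polynomial.X - 1 : ℝ[X]) ^ p.1 * Polynomial.derivative (Polynomial.X ^ p.2))) =
      ∑ p ∈ antidiagonal n, jacobiCoeff a b p.1 p.2 • ((p.1 + a) •
        (Polynomial.derivative ((Polynomial.X - 1 : ℝ[X]) ^ p.1) * Polynomial.X ^ p.2)) := by
  cases n with
  | zero => simp
  | succ n =>
    rw [Finset.Nat.sum_antidiagonal_succ', Finset.Nat.sum_antidiagonal_succ]
    simp only [pow_zero, Polynomial.derivative_one, mul_zero, zero_mul, smul_zero, zero_add]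
    refine Finset.sum_congr rfl fun ⟨s, k⟩ _ => ?_
    have hcoeff := congrArg (Polynomial.C (R := ℝ)) (jacobiCoeff_succ_left a b s k)
    simp only [map_mul, map_add, map_natCast, map_one] at hcoeff
    simp only [Polynomial.derivative_pow_succ, Polynomial.derivative_sub, Polynomial.derivative_X,
      Polynomial.derivative_one, Polynomial.smul_eq_C_mul, map_add, map_natCast, map_one,
      Nat.cast_succ]
    linear_combination -(Polynomial.X - 1) ^ s * Polynomial.X ^ k * hcoeff

theorem shiftedJacobiOperator_shiftedJacobi (n : ℕ) :
    shiftedJacobiOperator a b (shiftedJacobi a b n) =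
      -((n * (n + a + b + 1) : ℝ) • shiftedJacobi a b n) := by
  have hterm : ∀ p ∈ antidiagonal n, shiftedJacobiOperator a b
      (jacobiCoeff a b p.1 p.2 • ((Polynomial.X - 1) ^ p.1 * Polynomial.X ^ p.2)) =
        -((n * (n + a + b + 1) : ℝ) •
          (jacobiCoeff a b p.1 p.2 • ((Polynomial.X - 1) ^ p.1 * Polynomial.X ^ p.2))) +
        (jacobiCoeff a b p.1 p.2 •
            ((p.2 + b) • ((Polynomial.X - 1) ^ p.1 * Polynomial.derivative (Polynomial.X ^ p.2))) -
          jacobiCoeff a b p.1 p.2 • ((p.1 + a) •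
            (Polynomial.derivative ((Polynomial.X - 1) ^ p.1) * Polynomial.X ^ p.2))) := by
    intro p hp
    have hn : (p.1 + p.2 : ℝ) = n := by exact_mod_cast mem_antidiagonal.mp hp
    rw [map_smul, shiftedJacobiOperator_pow_mul_pow, hn, smul_add, smul_neg, smul_comm, smul_sub]
  rw [shiftedJacobi_eq_sum_antidiagonal, map_sum, Finset.sum_congr rfl hterm,
    Finset.sum_add_distrib, Finset.sum_sub_distrib, sum_antidiagonal_jacobiCoeff_smul, sub_self,
    add_zero, Finset.sum_neg_distrib, Finset.smul_sum]

/-- The operator `u D² + c D` by which, for `c = m + d / 2`, the Laplacian acts (up to a factor `4`)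
on the radial factor `q(‖x‖²)` of a product with a harmonic polynomial of degree `m`. -/
def radialOperator (c : ℝ) (q : ℝ[X]) : ℝ[X] :=
  Polynomial.X * q.derivative.derivative + Polynomial.C c * q.derivative

theorem radialOperator_one_sub_X_mul (p : ℝ[X]) :
    radialOperator (b + 1) ((1 - Polynomial.X) * p) =
      shiftedJacobiOperator 1 b p - Polynomial.C (b + 1) * p := by
  have hX : Polynomial.derivative (1 - Polynomial.X : ℝ[X]) = -1 := by simp
  simp only [radialOperator, shiftedJacobiOperator_apply, Polynomial.derivative_mul, map_add, hX,
    map_neg, Polynomial.derivative_one, map_one, map_ofNat]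
  ring

theorem radialOperator_one_sub_X_mul_shiftedJacobi (n : ℕ) :
    radialOperator (b + 1) ((1 - Polynomial.X) * shiftedJacobi 1 b n) =
      Polynomial.C (-((n + 1) * (n + 1 + b))) * shiftedJacobi 1 b n := by
  rw [radialOperator_one_sub_X_mul, shiftedJacobiOperator_shiftedJacobi, Polynomial.smul_eq_C_mul]
  simp only [map_neg, map_mul, map_add, map_one, map_natCast]
  ring

theorem aeval_shiftedJacobi {A : Type*} [CommRing A] [Algebra ℝ A] (n : ℕ) (y : A) :
    Polynomial.aeval y (shiftedJacobi a b n) =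
      Polynomial.aeval (2 * y - 1) (jacobiPoly n a b) := by
  simp only [shiftedJacobi, Polynomial.aeval_comp, map_sub, map_mul, map_ofNat, map_one,
    Polynomial.aeval_X]

end ShiftedJacobi

theorem eval_polynomial_aeval {σ R : Type*} [CommSemiring R] (x : σ → R) (q : MvPolynomial σ R)
    (p : R[X]) : eval x (Polynomial.aeval q p) = p.eval (eval x q) := by
  rw [← coe_aeval_eq_eval, RingHom.coe_coe, ← Polynomial.aeval_algHom_apply,
    ← Polynomial.coe_aeval_eq_eval]

section Laplacian

variable {d : ℕ}

theorem pderiv_sumSq (i : Fin d) : pderiv i (sumSq d) = 2 * X i := by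
  classical
  simp [sumSq, Derivation.leibniz_pow, pderiv_X, Pi.single_apply]

theorem pderiv_aeval_sumSq (i : Fin d) (q : ℝ[X]) :
    pderiv i (Polynomial.aeval (sumSq d) q) =
      2 * X i * Polynomial.aeval (sumSq d) q.derivative := by
  rw [Derivation.map_aeval, pderiv_sumSq, smul_eq_mul, mul_comm]

theorem mvLaplacian_mul (p q : MvPolynomial (Fin d) ℝ) :
    mvLaplacian (p * q) =
      mvLaplacian p * q + 2 * ∑ i, pderiv i p * pderiv i q + p * mvLaplacian q := by
  simp only [mvLaplacian, Finset.mul_sum, Finset.sum_mul, ← Finset.sum_add_distrib]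
  refine Finset.sum_congr rfl fun i _ => ?_
  simp only [Derivation.leibniz, map_add, smul_eq_mul]
  ring

theorem mvLaplacian_aeval_sumSq (q : ℝ[X]) :
    mvLaplacian (Polynomial.aeval (sumSq d) q) =
      4 * sumSq d * Polynomial.aeval (sumSq d) q.derivative.derivative +
        2 * d * Polynomial.aeval (sumSq d) q.derivative := by
  have hterm (i : Fin d) : pderiv i (pderiv i (Polynomial.aeval (sumSq d) q)) =
      4 * Polynomial.aeval (sumSq d) q.derivative.derivative * X i ^ 2 +
        2 * Polynomial.aeval (sumSq d) q.derivative := by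
    have pderiv_two : pderiv i (2 : MvPolynomial (Fin d) ℝ) = 0 := (pderiv i).map_natCast 2
    simp only [pderiv_aeval_sumSq, Derivation.leibniz, pderiv_X_self, pderiv_two, smul_eq_mul]
    ring
  simp only [mvLaplacian, hterm, Finset.sum_add_distrib, ← Finset.mul_sum, Finset.sum_const,
    Finset.card_univ, Fintype.card_fin, nsmul_eq_mul]
  rw [← sumSq]
  ring

theorem sum_pderiv_aeval_sumSq_mul_pderiv {m : ℕ} {Y : MvPolynomial (Fin d) ℝ}
    (hY : Y.IsHomogeneous m) (q : ℝ[X]) :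
    ∑ i, pderiv i (Polynomial.aeval (sumSq d) q) * pderiv i Y =
      2 * m * Polynomial.aeval (sumSq d) q.derivative * Y := by
  have euler : ∑ i, X i * pderiv i Y = m * Y := by rw [hY.sum_X_mul_pderiv, nsmul_eq_mul]
  calc ∑ i, pderiv i (Polynomial.aeval (sumSq d) q) * pderiv i Y
      = 2 * Polynomial.aeval (sumSq d) q.derivative * ∑ i, X i * pderiv i Y := by
        rw [Finset.mul_sum]
        refine Finset.sum_congr rfl fun i _ => ?_
        rw [pderiv_aeval_sumSq]
        ring
    _ = 2 * m * Polynomial.aeval (sumSq d) q.derivative * Y := by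
        rw [euler]
        ring

theorem mvLaplacian_aeval_sumSq_mul {m : ℕ} {Y : MvPolynomial (Fin d) ℝ}
    (hY : Y.IsHomogeneous m) (hΔ : mvLaplacian Y = 0) (q : ℝ[X]) :
    mvLaplacian (Polynomial.aeval (sumSq d) q * Y) =
      4 * Polynomial.aeval (sumSq d) (radialOperator (m + d / 2) q) * Y := by
  have hcoeff : 4 * C (σ := Fin d) (m + d / 2 : ℝ) = 2 * d + 4 * m := by
    have h : 4 * (m + d / 2 : ℝ) = 2 * d + 4 * m := by ring
    simpa only [map_mul, map_add, map_natCast, map_ofNat] using congrArg (C (σ := Fin d)) h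
  rw [mvLaplacian_mul, mvLaplacian_aeval_sumSq, sum_pderiv_aeval_sumSq_mul_pderiv hY, hΔ]
  simp only [radialOperator, map_add, map_mul, Polynomial.aeval_X, Polynomial.aeval_C,
    algebraMap_eq] at hcoeff ⊢
  linear_combination -Polynomial.aeval (sumSq d) q.derivative * Y * hcoeff

theorem mvLaplacian_one_sub_sumSq_mul_jacobiPoly {m : ℕ} {Y : MvPolynomial (Fin d) ℝ}
    (hY : Y.IsHomogeneous m) (hΔ : mvLaplacian Y = 0) (N : ℕ) {b : ℝ}
    (hb : b = m + ((d : ℝ) - 2) / 2) :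
    mvLaplacian ((1 - sumSq d) *
        Polynomial.aeval (2 * sumSq d - 1) (jacobiPoly N 1 b) * Y) =
      C (-4 * (N + 1) * (N + 1 + b)) *
        Polynomial.aeval (2 * sumSq d - 1) (jacobiPoly N 1 b) * Y := by
  have hradial : (1 - sumSq d) * Polynomial.aeval (2 * sumSq d - 1) (jacobiPoly N 1 b) =
      Polynomial.aeval (sumSq d) ((1 - Polynomial.X) * shiftedJacobi 1 b N) := by
    simp [aeval_shiftedJacobi]
  have hb1 : (m + d / 2 : ℝ) = b + 1 := by
    rw [hb]
    ring
  rw [hradial, mvLaplacian_aeval_sumSq_mul hY hΔ, hb1,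
    radialOperator_one_sub_X_mul_shiftedJacobi, map_mul, aeval_shiftedJacobi,
    Polynomial.aeval_C, algebraMap_eq]
  simp only [map_neg, map_mul, map_ofNat]
  ring

theorem eval_sumSq (x : Fin d → ℝ) : eval x (sumSq d) = ∑ i, x i ^ 2 := by
  simp [sumSq]

end Laplacian

/-- `Δ U_{j,ν}^n = -4j(n-j+(d-2)/2) P_{j-1}^{(1,n-2j+(d-2)/2)}(2‖x‖²-1) Y(x)`
where `U_{j,ν}^n(x) = (1-‖x‖²) P_{j-1}^{(1,n-2j+(d-2)/2)}(2‖x‖²-1) Y(x)` and `Y = Y_ν^{n-2j}`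
is a harmonic polynomial, homogeneous of degree `n - 2j`. -/
theorem stmt1 (d : ℕ) (hd : 2 ≤ d) (n j : ℕ) (hj1 : 1 ≤ j) (hjn : 2 * j ≤ n)
    (Y : MvPolynomial (Fin d) ℝ) (hYhom : Y.IsHomogeneous (n - 2 * j))
    (hYharm : mvLaplacian Y = 0)
    (U : MvPolynomial (Fin d) ℝ)
    (hU : U = (1 - sumSq d) *
        Polynomial.aeval (2 * sumSq d - 1)
          (jacobiPoly (j - 1) 1 ((n : ℝ) - 2 * (j : ℝ) + ((d : ℝ) - 2) / 2)) * Y) :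
    ∀ x : Fin d → ℝ,
      eval x (mvLaplacian U) =
        -4 * (j : ℝ) * ((n : ℝ) - (j : ℝ) + ((d : ℝ) - 2) / 2) *
          Polynomial.eval (2 * ∑ i, x i ^ 2 - 1)
            (jacobiPoly (j - 1) 1 ((n : ℝ) - 2 * (j : ℝ) + ((d : ℝ) - 2) / 2)) *
          eval x Y := by
  intro x
  obtain ⟨N, rfl⟩ := Nat.exists_eq_add_of_le' hj1
  obtain ⟨m, rfl⟩ := Nat.exists_eq_add_of_le hjn
  rw [Nat.add_sub_cancel_left] at hYhom
  rw [Nat.add_sub_cancel] at hU ⊢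
  have hb : ((2 * (N + 1) + m : ℕ) : ℝ) - 2 * ((N + 1 : ℕ) : ℝ) + ((d : ℝ) - 2) / 2 =
      m + ((d : ℝ) - 2) / 2 := by
    push_cast
    ring
  rw [hb] at hU ⊢
  rw [hU, mvLaplacian_one_sub_sumSq_mul_jacobiPoly hYhom hYharm N rfl]
  simp only [map_mul, map_sub, map_one, map_ofNat, eval_C, eval_polynomial_aeval, eval_sumSq]
  push_cast
  ring
end
end

section
/- Let λ ≥ 0 and define the inner product ⟨f,g⟩_S := (λ/ω_d)∫_{S^{d−1}} (d/dr)f(y)·(d/dr)g(y) dω(y) + (1/ω_d)∫_{S^{d−1}} f(y) g(y) dω(y), where (d/dr)f(y) denotes the derivative of t ↦ f(ty) at t = 1. Then for all degrees n, m and indices ν, μ, ⟨Y_ν^n, Y_μ^m⟩_S = (λn²+1)·δ_{n,m}·δ_{ν,μ}. In particular, the polynomials (λn²+1)^{−1/2}·Y_ν^n form an orthonormal family with respect to ⟨·,·⟩_S, and the space of homogeneous polynomials of degree n that are ⟨·,·⟩_S-orthogonal to all polynomials of lower degree is exactly H_n^d. -/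
open MeasureTheory Metric MvPolynomial RealInnerProductSpace

noncomputable section

/-- The Jacobi polynomial as a real function. -/
def jacobiR (n : ℕ) (a b x : ℝ) : ℝ := (jacobiPoly n a b).eval x

/-- `σ_m`, the dimension of the space of spherical harmonics of degree `m` in `d` variables. -/
def sigmaDim (d m : ℕ) : ℕ := (m + d - 1).choose (d - 1) - (m + d - 3).choose (d - 1)

/-- The surface area `ω_d = 2 π^{d/2} / Γ(d/2)` of the unit sphere `S^{d-1}`. -/
def omegaD (d : ℕ) : ℝ := 2 * Real.pi ^ ((d : ℝ) / 2) / Real.Gamma ((d : ℝ) / 2)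

/-- Euclidean space `ℝ^d`. -/
abbrev Edim (d : ℕ) := EuclideanSpace ℝ (Fin d)

/-- Evaluation of a polynomial in `d` variables at a point of `ℝ^d`. -/
def pEval {d : ℕ} (p : MvPolynomial (Fin d) ℝ) (x : Edim d) : ℝ := eval (fun i => x i) p

/-- The surface measure `dω` on the unit sphere `S^{d-1}`. -/
def sphMeasure (d : ℕ) : Measure (sphere (0 : Edim d) 1) :=
  (volume : Measure (Edim d)).toSphere

/-- The Sobolev inner product `⟨f,g⟩_I`. -/
def innerI (d : ℕ) (lam : ℝ) (f g : Edim d → ℝ) : ℝ :=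
  (lam / omegaD d) * ∫ x in closedBall (0 : Edim d) 1, ⟪gradient f x, gradient g x⟫ +
    (1 / omegaD d) * ∫ y : sphere (0 : Edim d) 1, f y * g y ∂(sphMeasure d)

/-- The Sobolev inner product `⟨f,g⟩_II`. -/
def innerII (d : ℕ) (lam : ℝ) (f g : Edim d → ℝ) : ℝ :=
  (lam / omegaD d) * ∫ x in closedBall (0 : Edim d) 1, ⟪gradient f x, gradient g x⟫ +
    f 0 * g 0

/-- The polynomials `U_{j,ν}^n`. -/
def Upoly (d : ℕ) (Y : (m : ℕ) → Fin (sigmaDim d m) → MvPolynomial (Fin d) ℝ)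
    (n j : ℕ) (ν : Fin (sigmaDim d (n - 2 * j))) : MvPolynomial (Fin d) ℝ :=
  if j = 0 then Y (n - 2 * j) ν
  else (1 - sumSq d) *
      Polynomial.aeval (2 * sumSq d - 1)
        (jacobiPoly (j - 1) 1 ((n : ℝ) - 2 * (j : ℝ) + ((d : ℝ) - 2) / 2)) *
      Y (n - 2 * j) ν


/-- The inner product `⟨f,g⟩_S` on the sphere, involving radial derivatives. -/
def innerS (d : ℕ) (lam : ℝ) (f g : Edim d → ℝ) : ℝ :=
  (lam / omegaD d) * ∫ y : sphere (0 : Edim d) 1,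
      deriv (fun t : ℝ => f (t • (y : Edim d))) 1 *
        deriv (fun t : ℝ => g (t • (y : Edim d))) 1 ∂(sphMeasure d) +
    (1 / omegaD d) * ∫ y : sphere (0 : Edim d) 1, f y * g y ∂(sphMeasure d)

/-
For a homogeneous polynomial `p`, polar coordinates write the Gaussian integral
`G(p) = ∫ p(x) exp (-‖x‖² / 2) dx` as a positive multiple of `∫ p` over the unit sphere, so
orthogonality on the sphere can be tested with `G`. Integration by parts gives
`G(∂ᵢ p) = G(xᵢ p)`, hence by Euler's identity, for `p`, `q` homogeneous of degrees `n`, `k`,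
`G(p Δq) - G(q Δp) = (k - n) G(p q)`.
If `Δp = 0` and `k < n`, then `G(p q)` is a multiple of `G(p Δq)`, and it vanishes by induction
on `k`. Conversely, if `p` is orthogonal to all lower degrees, then `q = ‖x‖² Δp` gives
`G(‖x‖² (Δp)²) = 0`, so `Δp = 0`. Finally `⟨p, q⟩_S` is `(λ n k + 1) / ω_d` times the integral
of `p q` over the sphere, because the radial derivative of `p` there is `n p`.
-/

section Polar

open Module Set

theorem integral_volumeIoiPow {F : Type*} [NormedAddCommGroup F] [NormedSpace ℝ F] (n : ℕ)
    (f : ℝ → F) :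
    ∫ r : Ioi (0 : ℝ), f r ∂(Measure.volumeIoiPow n) = ∫ r in Ioi (0 : ℝ), r ^ n • f r := by
  simp only [Measure.volumeIoiPow, ENNReal.ofReal]
  rw [integral_withDensity_eq_integral_smul (measurable_subtype_coe.pow_const _).real_toNNReal,
    integral_subtype_comap measurableSet_Ioi fun r ↦ Real.toNNReal (r ^ n) • f r]
  refine setIntegral_congr_fun measurableSet_Ioi fun r hr ↦ ?_
  simp only [NNReal.smul_def, Real.coe_toNNReal _ (pow_nonneg hr.out.le _)]

theorem integral_mul_norm_of_homogeneous {E : Type*} [NormedAddCommGroup E] [NormedSpace ℝ E]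
    [MeasurableSpace E] [BorelSpace E] [FiniteDimensional ℝ E] [Nontrivial E] (μ : Measure E)
    [μ.IsAddHaarMeasure] {f : E → ℝ} {m : ℕ} (hf : ∀ r : ℝ, 0 < r → ∀ x, f (r • x) = r ^ m * f x)
    (g : ℝ → ℝ) :
    ∫ x, f x * g ‖x‖ ∂μ =
      (∫ y : sphere (0 : E) 1, f y ∂μ.toSphere) *
        ∫ r in Ioi (0 : ℝ), r ^ (finrank ℝ E - 1) * (r ^ m * g r) := by
  let F (z : sphere (0 : E) 1 × Ioi (0 : ℝ)) : ℝ := f z.1 * ((z.2 : ℝ) ^ m * g z.2)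
  have hF (x : ({0}ᶜ : Set E)) : f x * g ‖(x : E)‖ = F (homeomorphUnitSphereProd E x) := by
    have hx : 0 < ‖(x : E)‖ := norm_pos_iff.2 x.2
    simp only [F, homeomorphUnitSphereProd_apply_fst_coe, homeomorphUnitSphereProd_apply_snd_coe]
    rw [hf _ (inv_pos.2 hx), inv_pow]
    field_simp
  calc ∫ x, f x * g ‖x‖ ∂μ
      = ∫ x : ({0}ᶜ : Set E), f x * g ‖(x : E)‖ ∂(μ.comap (↑)) := by
        rw [integral_subtype_comap (measurableSet_singleton _).compl fun x ↦ f x * g ‖x‖,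
          restrict_compl_singleton]
    _ = ∫ z, F z ∂(μ.toSphere.prod (.volumeIoiPow (finrank ℝ E - 1))) := by
        simp only [hF]
        exact μ.measurePreserving_homeomorphUnitSphereProd.integral_comp
          (Homeomorph.measurableEmbedding _) F
    _ = _ := by
        rw [integral_prod_mul (fun y : sphere (0 : E) 1 ↦ f y)
          (fun r : Ioi (0 : ℝ) ↦ (r : ℝ) ^ m * g r),
          integral_volumeIoiPow _ fun r ↦ r ^ m * g r]
        simp only [smul_eq_mul]

end Polar

/-- The radial profile of the Gaussian weight `exp (-‖x‖² / 2)`. The factor `1 / 2` makes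
`∂ᵢ p` and `xᵢ p` have equal integrals against it. -/
def gaussWeight (r : ℝ) : ℝ := Real.exp (-(1 / 2) * r ^ 2)

theorem gaussWeight_pos (r : ℝ) : 0 < gaussWeight r := Real.exp_pos _

theorem integral_Ioi_pow_mul_gaussWeight_pos (n : ℕ) :
    0 < ∫ r in Set.Ioi (0 : ℝ), r ^ n * gaussWeight r := by
  have h := integral_rpow_mul_exp_neg_mul_rpow (p := 2) (q := n) (b := 1 / 2) two_pos
    (by linarith [n.cast_nonneg (α := ℝ)]) one_half_pos
  simp only [Real.rpow_natCast, Real.rpow_ofNat] at h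
  simp only [gaussWeight, h]
  have := Real.Gamma_pos_of_pos (show 0 < ((n : ℝ) + 1) / 2 by positivity)
  positivity

section Evaluation

variable {d : ℕ}

theorem continuous_pEval (p : MvPolynomial (Fin d) ℝ) : Continuous (pEval p) :=
  (MvPolynomial.continuous_eval p).comp (by fun_prop)

theorem pEval_mul (p q : MvPolynomial (Fin d) ℝ) (x : Edim d) :
    pEval (p * q) x = pEval p x * pEval q x :=
  map_mul _ p q

theorem pEval_smul (c : ℝ) (p : MvPolynomial (Fin d) ℝ) (x : Edim d) :
    pEval (c • p) x = c * pEval p x :=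
  smul_eval _ p c

theorem pEval_injective : Function.Injective (pEval (d := d)) := fun _ _ h ↦
  MvPolynomial.funext fun x ↦ congrFun h (WithLp.toLp 2 x)

theorem pEval_apply_smul_of_isHomogeneous {p : MvPolynomial (Fin d) ℝ} {n : ℕ}
    (hp : p.IsHomogeneous n) (t : ℝ) (x : Edim d) : pEval p (t • x) = t ^ n * pEval p x := by
  simp only [pEval, eval_eq, Finset.mul_sum]
  refine Finset.sum_congr rfl fun s hs ↦ ?_
  simp only [PiLp.smul_apply, smul_eq_mul, mul_pow, Finset.prod_mul_distrib,
    Finset.prod_pow_eq_pow_sum, ← hp.degree_eq_sum_deg_support hs]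
  ring

theorem hasFDerivAt_pEval (p : MvPolynomial (Fin d) ℝ) (x : Edim d) :
    HasFDerivAt (pEval p)
      (∑ i, pEval (pderiv i p) x • (EuclideanSpace.proj i : Edim d →L[ℝ] ℝ)) x := by
  induction p using MvPolynomial.induction_on with
  | C a =>
    convert! hasFDerivAt_const (𝕜 := ℝ) a x using 1
    · ext y; simp [pEval]
    · simp [pEval]
  | add p q hp hq =>
    convert! hp.add hq using 1
    · ext y; simp [pEval]
    · simp [pEval, add_smul, Finset.sum_add_distrib]
  | mul_X p j hp =>
    convert! hp.mul (EuclideanSpace.proj j : Edim d →L[ℝ] ℝ).hasFDerivAt using 1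
    · ext y; simp [pEval]
    · ext y
      simp [pEval, pderiv_X, Pi.single_apply, apply_ite, add_mul, Finset.sum_add_distrib,
        Finset.mul_sum, mul_assoc]

theorem fderiv_pEval_single (p : MvPolynomial (Fin d) ℝ) (i : Fin d) (x : Edim d) :
    fderiv ℝ (pEval p) x (EuclideanSpace.single i 1) = pEval (pderiv i p) x := by
  simp [(hasFDerivAt_pEval p x).fderiv]

end Evaluation

section Euler

variable {d : ℕ}

/-- The Euler operator `∑ xᵢ ∂ᵢ`, which computes the radial derivative on the unit sphere. -/
def eulerOperator (d : ℕ) : MvPolynomial (Fin d) ℝ →ₗ[ℝ] MvPolynomial (Fin d) ℝ :=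
  ∑ i, LinearMap.mulLeft ℝ (X i) ∘ₗ (pderiv i).toLinearMap

theorem eulerOperator_apply (p : MvPolynomial (Fin d) ℝ) :
    eulerOperator d p = ∑ i, X i * pderiv i p := by
  simp [eulerOperator]

theorem eulerOperator_of_isHomogeneous {p : MvPolynomial (Fin d) ℝ} {n : ℕ}
    (hp : p.IsHomogeneous n) : eulerOperator d p = (n : ℝ) • p := by
  rw [eulerOperator_apply, hp.sum_X_mul_pderiv, Nat.cast_smul_eq_nsmul]

theorem deriv_pEval_smul_one (p : MvPolynomial (Fin d) ℝ) (y : Edim d) :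
    deriv (fun t : ℝ ↦ pEval p (t • y)) 1 = pEval (eulerOperator d p) y := by
  have hline : HasDerivAt (fun t : ℝ ↦ t • y) y 1 := by
    simpa using (hasDerivAt_id (1 : ℝ)).smul_const y
  have hp := (hasFDerivAt_pEval p y).comp_hasDerivAt_of_eq 1 hline (one_smul ℝ y).symm
  refine hp.deriv.trans ?_
  simp [eulerOperator_apply, pEval, mul_comm]

end Euler

section Laplacian

variable {d : ℕ}

theorem pderiv_eq_zero_of_isHomogeneous_zero {σ R : Type*} [CommSemiring R]
    {p : MvPolynomial σ R} (hp : p.IsHomogeneous 0) (i : σ) : pderiv i p = 0 := by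
  rw [totalDegree_eq_zero_iff_eq_C.1 ((totalDegree_zero_iff_isHomogeneous _).2 hp), pderiv_C]

theorem isHomogeneous_mvLaplacian {p : MvPolynomial (Fin d) ℝ} {n : ℕ} (hp : p.IsHomogeneous n) :
    (mvLaplacian p).IsHomogeneous (n - 2) :=
  IsHomogeneous.sum _ _ _ fun _ _ ↦ hp.pderiv.pderiv

theorem mvLaplacian_eq_zero_of_isHomogeneous {p : MvPolynomial (Fin d) ℝ} {n : ℕ}
    (hp : p.IsHomogeneous n) (hn : n < 2) : mvLaplacian p = 0 := by
  refine Finset.sum_eq_zero fun i _ ↦ pderiv_eq_zero_of_isHomogeneous_zero ?_ i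
  simpa only [show n - 1 = 0 by omega] using hp.pderiv (i := i)

theorem isHomogeneous_sumSq (d : ℕ) : (sumSq d).IsHomogeneous 2 :=
  IsHomogeneous.sum _ _ _ fun i _ ↦ isHomogeneous_X_pow i 2

theorem pEval_sumSq (x : Edim d) : pEval (sumSq d) x = ‖x‖ ^ 2 := by
  simp [pEval, sumSq, EuclideanSpace.norm_sq_eq]

theorem sum_pderiv_mul_pderiv_sub (p q : MvPolynomial (Fin d) ℝ) :
    ∑ i, pderiv i (p * pderiv i q - q * pderiv i p) = p * mvLaplacian q - q * mvLaplacian p := by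
  simp only [mvLaplacian, Finset.mul_sum, ← Finset.sum_sub_distrib, map_sub, pderiv_mul]
  exact Finset.sum_congr rfl fun i _ ↦ by ring

theorem sum_X_mul_pderiv_sub (p q : MvPolynomial (Fin d) ℝ) :
    ∑ i, X i * (p * pderiv i q - q * pderiv i p) =
      p * eulerOperator d q - q * eulerOperator d p := by
  simp only [eulerOperator_apply, Finset.mul_sum, ← Finset.sum_sub_distrib]
  exact Finset.sum_congr rfl fun i _ ↦ by ring

end Laplacian

section Gaussian

variable {d : ℕ}

theorem continuous_gaussWeight_norm {E : Type*} [SeminormedAddCommGroup E] :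
    Continuous fun x : E ↦ gaussWeight ‖x‖ := by
  unfold gaussWeight
  fun_prop

theorem hasFDerivAt_gaussWeight_norm {E : Type*} [NormedAddCommGroup E] [InnerProductSpace ℝ E]
    (x : E) : HasFDerivAt (fun x : E ↦ gaussWeight ‖x‖) (-gaussWeight ‖x‖ • innerSL ℝ x) x := by
  convert! ((hasStrictFDerivAt_norm_sq x).hasFDerivAt.const_mul (-(1 / 2))).exp using 1
  ext y
  simp [gaussWeight]

theorem gaussWeight_norm_eq_prod (x : Edim d) : gaussWeight ‖x‖ = ∏ i, gaussWeight (x i) := by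
  simp [gaussWeight, EuclideanSpace.norm_sq_eq, Finset.mul_sum, ← Real.exp_sum]

theorem integrable_pEval_mul_gaussWeight (p : MvPolynomial (Fin d) ℝ) :
    Integrable fun x : Edim d ↦ pEval p x * gaussWeight ‖x‖ := by
  induction p using MvPolynomial.induction_on' with
  | add p q hp hq => exact (hp.add hq).congr (.of_forall fun x ↦ by simp [pEval, add_mul])
  | monomial s a =>
    have hcoord (n : ℕ) : Integrable fun r : ℝ ↦ r ^ n * gaussWeight r := by
      simpa only [Real.rpow_natCast, gaussWeight] using
        integrable_rpow_mul_exp_neg_mul_sq one_half_pos (s := n)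
          (by linarith [n.cast_nonneg (α := ℝ)])
    have hprod : Integrable fun x : Fin d → ℝ ↦ ∏ i, (x i ^ s i * gaussWeight (x i)) :=
      Integrable.fintype_prod fun i ↦ hcoord (s i)
    refine (((PiLp.volume_preserving_ofLp (Fin d)).integrable_comp_of_integrable hprod).const_mul
      a).congr (.of_forall fun x ↦ ?_)
    simp [pEval, eval_monomial, Finsupp.prod_fintype, gaussWeight_norm_eq_prod,
      Finset.prod_mul_distrib, mul_assoc]

/-- The moment functional `p ↦ ∫ p(x) exp (-‖x‖² / 2) dx`, a stand-in for integration over the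
sphere for which integration by parts has no boundary term. -/
def gaussIntegral (d : ℕ) : MvPolynomial (Fin d) ℝ →ₗ[ℝ] ℝ where
  toFun p := ∫ x : Edim d, pEval p x * gaussWeight ‖x‖
  map_add' p q := by
    rw [← integral_add (integrable_pEval_mul_gaussWeight p) (integrable_pEval_mul_gaussWeight q)]
    simp [pEval, add_mul]
  map_smul' c p := by
    simp [pEval_smul, mul_assoc, integral_const_mul]

theorem gaussIntegral_pderiv (p : MvPolynomial (Fin d) ℝ) (i : Fin d) :
    gaussIntegral d (pderiv i p) = gaussIntegral d (X i * p) := by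
  have hweight (x : Edim d) :
      pEval p x * fderiv ℝ (fun x : Edim d ↦ gaussWeight ‖x‖) x (EuclideanSpace.single i 1) =
        -(pEval (X i * p) x * gaussWeight ‖x‖) := by
    simp [(hasFDerivAt_gaussWeight_norm x).fderiv, pEval, EuclideanSpace.inner_single_right,
      mul_comm, mul_left_comm, mul_assoc]
  have hparts := integral_mul_fderiv_eq_neg_fderiv_mul_of_integrable
    (μ := (volume : Measure (Edim d))) (f := pEval p) (g := fun x : Edim d ↦ gaussWeight ‖x‖)
    (v := EuclideanSpace.single i 1)
    (by simpa only [fderiv_pEval_single] using integrable_pEval_mul_gaussWeight (pderiv i p))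
    (by simp only [hweight]; exact (integrable_pEval_mul_gaussWeight (X i * p)).neg)
    (integrable_pEval_mul_gaussWeight p)
    (fun x _ ↦ (hasFDerivAt_pEval p x).differentiableAt)
    (fun x _ ↦ (hasFDerivAt_gaussWeight_norm x).differentiableAt)
  simp only [hweight, fderiv_pEval_single, integral_neg, neg_inj] at hparts
  exact hparts.symm

theorem gaussIntegral_eq_zero_iff_of_nonneg {p : MvPolynomial (Fin d) ℝ}
    (hp : ∀ x, 0 ≤ pEval p x) : gaussIntegral d p = 0 ↔ p = 0 := by
  refine ⟨fun h ↦ ?_, fun h ↦ h ▸ map_zero _⟩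
  have hae := (integral_eq_zero_iff_of_nonneg
    (fun x ↦ mul_nonneg (hp x) (gaussWeight_pos ‖x‖).le) (integrable_pEval_mul_gaussWeight p)).1 h
  have hzero := (((continuous_pEval p).mul continuous_gaussWeight_norm).ae_eq_iff_eq volume
    continuous_zero).1 hae
  refine pEval_injective (funext fun x ↦ ?_)
  simpa [pEval, (gaussWeight_pos _).ne'] using congrFun hzero x

theorem gaussIntegral_green (p q : MvPolynomial (Fin d) ℝ) :
    gaussIntegral d (p * mvLaplacian q) - gaussIntegral d (q * mvLaplacian p) =
      gaussIntegral d (p * eulerOperator d q) - gaussIntegral d (q * eulerOperator d p) := by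
  simp only [← map_sub, ← sum_pderiv_mul_pderiv_sub, ← sum_X_mul_pderiv_sub, map_sum,
    gaussIntegral_pderiv]

theorem gaussIntegral_green_of_isHomogeneous {p q : MvPolynomial (Fin d) ℝ} {n k : ℕ}
    (hp : p.IsHomogeneous n) (hq : q.IsHomogeneous k) :
    gaussIntegral d (p * mvLaplacian q) - gaussIntegral d (q * mvLaplacian p) =
      ((k : ℝ) - n) * gaussIntegral d (p * q) := by
  rw [gaussIntegral_green, eulerOperator_of_isHomogeneous hp, eulerOperator_of_isHomogeneous hq]
  simp only [mul_smul_comm, map_smul, smul_eq_mul, mul_comm q p]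
  ring

theorem gaussIntegral_mul_eq_zero_of_harmonic {P q : MvPolynomial (Fin d) ℝ} {n k : ℕ}
    (hP : P.IsHomogeneous n) (hharm : mvLaplacian P = 0) (hq : q.IsHomogeneous k) (hk : k < n) :
    gaussIntegral d (P * q) = 0 := by
  induction k using Nat.strong_induction_on generalizing q with
  | _ k ih =>
    have hΔ : gaussIntegral d (P * mvLaplacian q) = 0 := by
      obtain hk2 | hk2 := lt_or_ge k 2
      · rw [mvLaplacian_eq_zero_of_isHomogeneous hq hk2, mul_zero, map_zero]
      · exact ih (k - 2) (by omega) (isHomogeneous_mvLaplacian hq) (by omega)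
    have hgreen := gaussIntegral_green_of_isHomogeneous hP hq
    rw [hΔ, hharm, mul_zero, map_zero, sub_zero, eq_comm, mul_eq_zero, sub_eq_zero,
      Nat.cast_inj] at hgreen
    exact hgreen.resolve_left hk.ne

theorem mvLaplacian_eq_zero_of_gaussIntegral_mul_eq_zero {P : MvPolynomial (Fin d) ℝ} {n : ℕ}
    (hP : P.IsHomogeneous n)
    (horth : ∀ k < n, ∀ q : MvPolynomial (Fin d) ℝ, q.IsHomogeneous k →
      gaussIntegral d (P * q) = 0) :
    mvLaplacian P = 0 := by
  obtain hn | hn := lt_or_ge n 2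
  · exact mvLaplacian_eq_zero_of_isHomogeneous hP hn
  have hQ : (sumSq d * mvLaplacian P).IsHomogeneous n := by
    simpa only [show 2 + (n - 2) = n by omega] using
      (isHomogeneous_sumSq d).mul (isHomogeneous_mvLaplacian hP)
  have hgreen := gaussIntegral_green_of_isHomogeneous hP hQ
  rw [horth (n - 2) (by omega) _ (isHomogeneous_mvLaplacian hQ), sub_self, zero_mul, zero_sub,
    neg_eq_zero, mul_assoc, gaussIntegral_eq_zero_iff_of_nonneg fun x ↦ by
      rw [pEval_mul, pEval_mul, pEval_sumSq]
      exact mul_nonneg (sq_nonneg _) (mul_self_nonneg _), mul_eq_zero, mul_self_eq_zero] at hgreen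
  obtain hsq | hΔ := hgreen
  · exact Finset.sum_eq_zero fun i _ ↦
      absurd (pEval_sumSq (EuclideanSpace.single i 1)) (by simp [hsq, pEval])
  · exact hΔ

end Gaussian

section Sphere

variable {d : ℕ}

theorem integrable_pEval_sphere (p : MvPolynomial (Fin d) ℝ) :
    Integrable (fun y : sphere (0 : Edim d) 1 ↦ pEval p y) (sphMeasure d) := by
  have : CompactSpace (sphere (0 : Edim d) 1) := isCompact_iff_compactSpace.1 (isCompact_sphere _ _)
  have : IsFiniteMeasure (sphMeasure d) := by unfold sphMeasure; infer_instance
  exact ((continuous_pEval p).comp continuous_subtype_val).integrable_of_hasCompactSupport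
    (.of_compactSpace _)

/-- Integration of polynomials over the unit sphere, with respect to the surface measure. -/
def sphereIntegral (d : ℕ) : MvPolynomial (Fin d) ℝ →ₗ[ℝ] ℝ where
  toFun p := ∫ y : sphere (0 : Edim d) 1, pEval p y ∂(sphMeasure d)
  map_add' p q := by
    rw [← integral_add (integrable_pEval_sphere p) (integrable_pEval_sphere q)]
    simp [pEval]
  map_smul' c p := by
    simp [pEval_smul, integral_const_mul]

theorem sphereIntegral_mul (p q : MvPolynomial (Fin d) ℝ) :
    sphereIntegral d (p * q) =
      ∫ y : sphere (0 : Edim d) 1, pEval p y * pEval q y ∂(sphMeasure d) := by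
  simp only [← pEval_mul]
  rfl

theorem gaussIntegral_eq_sphereIntegral_mul (hd : 0 < d) {p : MvPolynomial (Fin d) ℝ} {m : ℕ}
    (hp : p.IsHomogeneous m) :
    gaussIntegral d p =
      sphereIntegral d p * ∫ r in Set.Ioi (0 : ℝ), r ^ (d - 1 + m) * gaussWeight r := by
  have : Nonempty (Fin d) := ⟨⟨0, hd⟩⟩
  have hpolar := integral_mul_norm_of_homogeneous (volume : Measure (Edim d))
    (fun t _ ↦ pEval_apply_smul_of_isHomogeneous hp t) gaussWeight
  simp only [← mul_assoc, ← pow_add, finrank_euclideanSpace_fin] at hpolar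
  exact hpolar

theorem sphereIntegral_eq_zero_iff (hd : 0 < d) {p : MvPolynomial (Fin d) ℝ} {m : ℕ}
    (hp : p.IsHomogeneous m) : sphereIntegral d p = 0 ↔ gaussIntegral d p = 0 := by
  rw [gaussIntegral_eq_sphereIntegral_mul hd hp, mul_eq_zero,
    or_iff_left (integral_Ioi_pow_mul_gaussWeight_pos _).ne']

end Sphere

section InnerS

variable {d : ℕ}

theorem omegaD_pos (hd : 0 < d) : 0 < omegaD d := by
  have := Real.Gamma_pos_of_pos (show 0 < (d : ℝ) / 2 by positivity)
  unfold omegaD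
  positivity

theorem innerS_const_mul (lam a b : ℝ) (f g : Edim d → ℝ) :
    innerS d lam (fun x ↦ a * f x) (fun x ↦ b * g x) = a * b * innerS d lam f g := by
  simp only [innerS, deriv_const_mul_field, mul_mul_mul_comm a _ b, integral_const_mul]
  ring

theorem innerS_pEval (lam : ℝ) (p q : MvPolynomial (Fin d) ℝ) :
    innerS d lam (pEval p) (pEval q) =
      lam / omegaD d * sphereIntegral d (eulerOperator d p * eulerOperator d q) +
        1 / omegaD d * sphereIntegral d (p * q) := by
  simp only [innerS, deriv_pEval_smul_one, sphereIntegral_mul]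

theorem innerS_pEval_of_isHomogeneous (lam : ℝ) {p q : MvPolynomial (Fin d) ℝ} {n k : ℕ}
    (hp : p.IsHomogeneous n) (hq : q.IsHomogeneous k) :
    innerS d lam (pEval p) (pEval q) =
      (lam * n * k + 1) * (1 / omegaD d * sphereIntegral d (p * q)) := by
  rw [innerS_pEval, eulerOperator_of_isHomogeneous hp, eulerOperator_of_isHomogeneous hq,
    smul_mul_smul_comm, map_smul, smul_eq_mul]
  ring

theorem innerS_pEval_sum_right (lam : ℝ) (p : MvPolynomial (Fin d) ℝ) {ι : Type*} (s : Finset ι)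
    (q : ι → MvPolynomial (Fin d) ℝ) :
    innerS d lam (pEval p) (pEval (∑ i ∈ s, q i)) =
      ∑ i ∈ s, innerS d lam (pEval p) (pEval (q i)) := by
  simp only [innerS_pEval, map_sum, Finset.mul_sum, Finset.sum_add_distrib]

theorem innerS_pEval_eq_zero_iff (hd : 0 < d) {lam : ℝ} (hlam : 0 ≤ lam)
    {p q : MvPolynomial (Fin d) ℝ} {n k : ℕ} (hp : p.IsHomogeneous n) (hq : q.IsHomogeneous k) :
    innerS d lam (pEval p) (pEval q) = 0 ↔ gaussIntegral d (p * q) = 0 := by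
  have hω := omegaD_pos hd
  have hfactor : (lam * n * k + 1) * (1 / omegaD d) ≠ 0 := by positivity
  rw [innerS_pEval_of_isHomogeneous lam hp hq, ← mul_assoc, mul_eq_zero, or_iff_right hfactor,
    sphereIntegral_eq_zero_iff hd (hp.mul hq)]

theorem forall_innerS_eq_zero_iff_mvLaplacian_eq_zero (hd : 0 < d) {lam : ℝ} (hlam : 0 ≤ lam)
    {P : MvPolynomial (Fin d) ℝ} {n : ℕ} (hP : P.IsHomogeneous n) :
    (∀ p : MvPolynomial (Fin d) ℝ, p.totalDegree < n → innerS d lam (pEval P) (pEval p) = 0) ↔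
      mvLaplacian P = 0 := by
  constructor
  · refine fun horth ↦ mvLaplacian_eq_zero_of_gaussIntegral_mul_eq_zero hP fun k hk q hq ↦ ?_
    exact (innerS_pEval_eq_zero_iff hd hlam hP hq).1 (horth q (hq.totalDegree_le.trans_lt hk))
  · intro hharm p hp
    rw [← sum_homogeneousComponent p, innerS_pEval_sum_right]
    refine Finset.sum_eq_zero fun k hk ↦ ?_
    have hcomp := homogeneousComponent_isHomogeneous k p
    refine (innerS_pEval_eq_zero_iff hd hlam hP hcomp).2 ?_
    exact gaussIntegral_mul_eq_zero_of_harmonic hP hharm hcomp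
      ((Finset.mem_range_succ_iff.1 hk).trans_lt hp)

end InnerS

theorem sigma_fin_eq_iff {α : Type*} {s : α → ℕ} {a b : Σ m, Fin (s m)} :
    a = b ↔ a.1 = b.1 ∧ (a.2 : ℕ) = b.2 := by
  obtain ⟨n, ν⟩ := a
  obtain ⟨m, μ⟩ := b
  constructor
  · rintro ⟨⟩
    exact ⟨rfl, rfl⟩
  · rintro ⟨rfl : n = m, h : (ν : ℕ) = μ⟩
    rw [Fin.ext h]

theorem stmt7_general {d : ℕ} (hd : 0 < d) {lam : ℝ} (hlam : 0 ≤ lam) {ι : Type*} [DecidableEq ι]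
    (deg : ι → ℕ) (Y : ι → MvPolynomial (Fin d) ℝ) (hYhom : ∀ i, (Y i).IsHomogeneous (deg i))
    (hYon : ∀ i j,
      (1 / omegaD d) * ∫ y : sphere (0 : Edim d) 1, pEval (Y i) y * pEval (Y j) y ∂(sphMeasure d) =
        if i = j then 1 else 0) :
    (∀ i j, innerS d lam (pEval (Y i)) (pEval (Y j)) =
      if i = j then lam * (deg i : ℝ) ^ 2 + 1 else 0) ∧
    (∀ i j, innerS d lam (fun x ↦ (√(lam * (deg i : ℝ) ^ 2 + 1))⁻¹ * pEval (Y i) x)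
      (fun x ↦ (√(lam * (deg j : ℝ) ^ 2 + 1))⁻¹ * pEval (Y j) x) = if i = j then 1 else 0) ∧
    (∀ (n : ℕ) (P : MvPolynomial (Fin d) ℝ), P.IsHomogeneous n →
      ((∀ p : MvPolynomial (Fin d) ℝ, p.totalDegree < n →
          innerS d lam (pEval P) (pEval p) = 0) ↔ mvLaplacian P = 0)) := by
  have hgram (i j) : innerS d lam (pEval (Y i)) (pEval (Y j)) =
      if i = j then lam * (deg i : ℝ) ^ 2 + 1 else 0 := by
    have hij : 1 / omegaD d * sphereIntegral d (Y i * Y j) = if i = j then 1 else 0 := by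
      simpa only [sphereIntegral_mul] using hYon i j
    rw [innerS_pEval_of_isHomogeneous lam (hYhom i) (hYhom j), hij]
    split_ifs with h
    · rw [h]; ring
    · ring
  refine ⟨hgram, fun i j ↦ ?_,
    fun n P hP ↦ forall_innerS_eq_zero_iff_mvLaplacian_eq_zero hd hlam hP⟩
  rw [innerS_const_mul, hgram]
  split_ifs with h
  · have hpos : 0 < lam * (deg i : ℝ) ^ 2 + 1 := by positivity
    rw [← h, ← mul_inv, Real.mul_self_sqrt hpos.le, inv_mul_cancel₀ hpos.ne']
  · exact mul_zero _

/-- `⟨Y_ν^n, Y_μ^m⟩_S = (λn²+1)δ_{n,m}δ_{ν,μ}`; the normalized spherical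
harmonics `(λn²+1)^{-1/2} Y_ν^n` form an orthonormal family for `⟨·,·⟩_S`, and the space of
homogeneous polynomials of degree `n` that are `⟨·,·⟩_S`-orthogonal to all polynomials of
lower degree is exactly `H_n^d`. -/
theorem stmt7 (d : ℕ) (hd : 2 ≤ d) (lam : ℝ) (hlam : 0 ≤ lam)
    (Y : (m : ℕ) → Fin (sigmaDim d m) → MvPolynomial (Fin d) ℝ)
    (hYhom : ∀ m ν, (Y m ν).IsHomogeneous m)
    (hYharm : ∀ m ν, mvLaplacian (Y m ν) = 0)
    (hYon : ∀ (m k : ℕ) (ν : Fin (sigmaDim d m)) (μ : Fin (sigmaDim d k)),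
      (1 / omegaD d) * ∫ y : sphere (0 : Edim d) 1,
          pEval (Y m ν) y * pEval (Y k μ) y ∂(sphMeasure d) =
        if m = k ∧ (ν : ℕ) = (μ : ℕ) then 1 else 0)
    :
    (∀ (n m : ℕ) (ν : Fin (sigmaDim d n)) (μ : Fin (sigmaDim d m)),
      innerS d lam (pEval (Y n ν)) (pEval (Y m μ)) =
        if n = m ∧ (ν : ℕ) = (μ : ℕ) then lam * (n : ℝ) ^ 2 + 1 else 0) ∧
    (∀ (n m : ℕ) (ν : Fin (sigmaDim d n)) (μ : Fin (sigmaDim d m)),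
      innerS d lam
          (fun x => (Real.sqrt (lam * (n : ℝ) ^ 2 + 1))⁻¹ * pEval (Y n ν) x)
          (fun x => (Real.sqrt (lam * (m : ℝ) ^ 2 + 1))⁻¹ * pEval (Y m μ) x) =
        if n = m ∧ (ν : ℕ) = (μ : ℕ) then 1 else 0) ∧
    (∀ (n : ℕ) (P : MvPolynomial (Fin d) ℝ), P.IsHomogeneous n →
      ((∀ p : MvPolynomial (Fin d) ℝ, p.totalDegree < n →
          innerS d lam (pEval P) (pEval p) = 0) ↔ mvLaplacian P = 0)) := by
  have h := stmt7_general (by omega) hlam Sigma.fst (fun i : Σ m, Fin (sigmaDim d m) ↦ Y i.1 i.2)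
    (fun i ↦ hYhom i.1 i.2) fun i j ↦ by simpa only [sigma_fin_eq_iff] using hYon i.1 j.1 i.2 j.2
  simp only [sigma_fin_eq_iff] at h
  exact ⟨fun n m ν μ ↦ h.1 ⟨n, ν⟩ ⟨m, μ⟩, fun n m ν μ ↦ h.2.1 ⟨n, ν⟩ ⟨m, μ⟩, h.2.2⟩
end
end
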